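/- Let u be a C¹ function on an open set Ω ⊆ ℝⁿ such that Δv = u holds weakly for some C¹ function v on Ω (i.e. ∫ v·Δh = ∫ u·h for all h ∈ C_c^∞(Ω)). If u is smooth, then v is smooth. -/

import Mathlib

open MeasureTheory

/-- The Euclidean Laplacian `Δf = ∑ᵢ ∂²f/∂xᵢ²` on `ℝⁿ`. -/
noncomputable def eLap {n : ℕ} (f : EuclideanSpace ℝ (Fin n) → ℝ)
    (x : EuclideanSpace ℝ (Fin n)) : ℝ :=
  ∑ i : Fin n, iteratedFDeriv ℝ 2 f x ![EuclideanSpace.single i 1, EuclideanSpace.single i 1]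

section WeylHelpers

open Filter Topology
open scoped ContDiff

/-- The radial kernels used below: `∇η (y) = φ (y) y`. -/
theorem weyl_kernels (n : ℕ) : ∃ η φ : EuclideanSpace ℝ (Fin n) → ℝ,
    ContDiff ℝ ∞ η ∧ ContDiff ℝ ∞ φ ∧ (∀ y, 1 ≤ ‖y‖ → η y = 0) ∧ (∀ y, 1 ≤ ‖y‖ → φ y = 0) ∧
    (∀ y w, fderiv ℝ η y w = φ y * inner ℝ y w) ∧ 0 < ∫ y, φ y := by
  have hd : ∀ t : ℝ, HasDerivAt expNegInvGlue ((t⁻¹) ^ 2 * expNegInvGlue t) t := by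
    intro t
    have := expNegInvGlue.hasDerivAt_polynomial_eval_inv_mul (1 : Polynomial ℝ) t
    simpa using this
  have hg : ContDiff ℝ ∞ (fun t : ℝ => (t⁻¹) ^ 2 * expNegInvGlue t) := by
    have := expNegInvGlue.contDiff_polynomial_eval_inv_mul (n := ⊤) (Polynomial.X ^ 2 : Polynomial ℝ)
    simpa using this
  have hq : ContDiff ℝ ∞ (fun y : EuclideanSpace ℝ (Fin n) => 1 - ‖y‖ ^ 2) :=
    contDiff_const.sub (contDiff_norm_sq ℝ)
  have hq0 : ∀ y : EuclideanSpace ℝ (Fin n), 1 ≤ ‖y‖ → 1 - ‖y‖ ^ 2 ≤ 0 := by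
    intro y hy; nlinarith
  have hφ : ContDiff ℝ ∞ (fun y : EuclideanSpace ℝ (Fin n) =>
      ((1 - ‖y‖ ^ 2)⁻¹) ^ 2 * expNegInvGlue (1 - ‖y‖ ^ 2)) := hg.comp hq
  have hφ0 : ∀ y : EuclideanSpace ℝ (Fin n), 1 ≤ ‖y‖ →
      ((1 - ‖y‖ ^ 2)⁻¹) ^ 2 * expNegInvGlue (1 - ‖y‖ ^ 2) = 0 := by
    intro y hy
    rw [expNegInvGlue.zero_of_nonpos (hq0 y hy), mul_zero]
  refine ⟨fun y => (-1 / 2) * expNegInvGlue (1 - ‖y‖ ^ 2),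
    fun y => ((1 - ‖y‖ ^ 2)⁻¹) ^ 2 * expNegInvGlue (1 - ‖y‖ ^ 2),
    contDiff_const.mul (expNegInvGlue.contDiff.comp hq), hφ, ?_, hφ0, ?_, ?_⟩
  · intro y hy
    simp only
    rw [expNegInvGlue.zero_of_nonpos (hq0 y hy), mul_zero]
  · intro y w
    have h1 : HasFDerivAt (fun y : EuclideanSpace ℝ (Fin n) => 1 - ‖y‖ ^ 2)
        (-(2 • innerSL ℝ y)) y := (hasStrictFDerivAt_norm_sq y).hasFDerivAt.const_sub 1
    have h2 := ((hd (1 - ‖y‖ ^ 2)).comp_hasFDerivAt y h1).const_mul (-1 / 2)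
    have h3 := h2.fderiv
    simp only [Function.comp_def] at h3
    rw [h3]
    simp
    ring
  · apply Continuous.integral_pos_of_hasCompactSupport_nonneg_nonzero (x := 0) hφ.continuous
    · apply HasCompactSupport.intro (isCompact_closedBall (0 : EuclideanSpace ℝ (Fin n)) 1)
      intro y hy
      apply hφ0
      simp at hy
      exact hy.le
    · intro y
      have := expNegInvGlue.nonneg (1 - ‖y‖ ^ 2)
      simp only [Pi.zero_apply]
      positivity
    · have := expNegInvGlue.pos_of_pos (x := 1) one_pos
      simp [this.ne']

/-- Smoothness of averages of translates of a smooth compactly supported function. -/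
theorem weyl_contDiff_param {E : Type} [NormedAddCommGroup E] [NormedSpace ℝ E]
    [MeasurableSpace E] [BorelSpace E] [FiniteDimensional ℝ E]
    {X : Type} [MeasurableSpace X] (μ : Measure X) (w : X → ℝ) (T : X → E)
    (hw : Integrable w μ) (hT : Measurable T) (m : ℕ) :
    ∀ {F : Type} [NormedAddCommGroup F] [NormedSpace ℝ F] (U : E → F),
      ContDiff ℝ ∞ U → HasCompactSupport U →
      ContDiff ℝ m (fun x => ∫ a, w a • U (x - T a) ∂μ) := by
  have hmeas : ∀ {F : Type} [NormedAddCommGroup F] [NormedSpace ℝ F] (U : E → F),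
      Continuous U → ∀ x, AEStronglyMeasurable (fun a => w a • U (x - T a)) μ := by
    intro F _ _ U hU x
    refine hw.aestronglyMeasurable.smul ?_
    exact (hU.stronglyMeasurable.comp_measurable
      (measurable_const.sub hT)).aestronglyMeasurable
  have hbd : ∀ {F : Type} [NormedAddCommGroup F] [NormedSpace ℝ F] (U : E → F),
      ∀ C, (∀ x, ‖U x‖ ≤ C) → ∀ x a, ‖w a • U (x - T a)‖ ≤ ‖w a‖ * C := by
    intro F _ _ U C hC x a
    rw [norm_smul]
    exact mul_le_mul_of_nonneg_left (hC _) (norm_nonneg _)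
  induction m with
  | zero =>
    intro F _ _ U hU hc
    obtain ⟨C, hC⟩ := hc.exists_bound_of_continuous hU.continuous
    simp only [Nat.cast_zero, contDiff_zero]
    refine continuous_of_dominated (bound := fun a => ‖w a‖ * C) (hmeas U hU.continuous)
      (fun x => .of_forall (hbd U C hC x)) (hw.norm.mul_const C) (.of_forall fun a => ?_)
    have := hU.continuous
    fun_prop
  | succ m ih =>
    intro F _ _ U hU hc
    obtain ⟨C, hC⟩ := hc.exists_bound_of_continuous hU.continuous
    have hU' : ContDiff ℝ ∞ (fderiv ℝ U) := hU.fderiv_right (by simp)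
    have hc' : HasCompactSupport (fderiv ℝ U) := hc.fderiv (𝕜 := ℝ)
    obtain ⟨C', hC'⟩ := hc'.exists_bound_of_continuous hU'.continuous
    push_cast
    rw [contDiff_succ_iff_hasFDerivAt]
    refine ⟨_, ih (fderiv ℝ U) hU' hc', fun x => ?_⟩
    refine hasFDerivAt_integral_of_dominated_of_fderiv_le (s := Set.univ)
      (bound := fun a => ‖w a‖ * C') univ_mem
      (.of_forall (hmeas U hU.continuous)) ?_ (hmeas _ hU'.continuous x)
      (.of_forall fun a x _ => hbd _ C' hC' x a) (hw.norm.mul_const C') ?_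
    · exact (hw.norm.mul_const C).mono' (hmeas U hU.continuous x) (.of_forall (hbd U C hC x))
    · refine .of_forall fun a x _ => ?_
      have h1 := (hU.differentiable (by simp) (x - T a)).hasFDerivAt
      have h2 : HasFDerivAt (fun x => x - T a) (ContinuousLinearMap.id ℝ E) x :=
        (hasFDerivAt_id x).sub_const _
      exact (h1.comp x h2).const_smul (w a)

/-- Change of variables. -/
theorem weyl_change {n : ℕ} (x : EuclideanSpace ℝ (Fin n)) (s : ℝ)
    (g : EuclideanSpace ℝ (Fin n) → ℝ) :
    ∫ z, g (s⁻¹ • (x - z)) =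
      |((s⁻¹) ^ Module.finrank ℝ (EuclideanSpace ℝ (Fin n)))⁻¹| * ∫ y, g y := by
  rw [integral_sub_left_eq_self (fun z => g (s⁻¹ • z)) volume x, Measure.integral_comp_smul]
  rfl

theorem weyl_identity {n : ℕ} (η φ V U : EuclideanSpace ℝ (Fin n) → ℝ)
    (hη : ContDiff ℝ ∞ η) (hηφ : ∀ y w, fderiv ℝ η y w = φ y * inner ℝ y w)
    (hV : ContDiff ℝ 1 V) (hVc : HasCompactSupport V)
    (x : EuclideanSpace ℝ (Fin n)) (s : ℝ) (hs : 0 < s)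
    (hweak : ∫ z, V z * eLap (fun z => η (s⁻¹ • (x - z))) z = ∫ z, U z * η (s⁻¹ • (x - z))) :
    ∫ y, φ y * fderiv ℝ V (x - s • y) y = s * ∫ y, U (x - s • y) * η y := by
  set h : EuclideanSpace ℝ (Fin n) → ℝ := fun z => η (s⁻¹ • (x - z)) with hh
  have hhs : ContDiff ℝ ∞ h := hη.comp (by fun_prop)
  have hh' : ContDiff ℝ ∞ (fderiv ℝ h) := hhs.fderiv_right (by simp)
  have hdh : ∀ z w, fderiv ℝ h z w =
      - s⁻¹ * (φ (s⁻¹ • (x - z)) * inner ℝ (s⁻¹ • (x - z)) w) := by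
    intro z w
    have h1 := (hη.differentiable (by simp) (s⁻¹ • (x - z))).hasFDerivAt
    have h2 : HasFDerivAt (fun z => s⁻¹ • (x - z))
        (s⁻¹ • (-(ContinuousLinearMap.id ℝ (EuclideanSpace ℝ (Fin n))))) z :=
      ((hasFDerivAt_id z).const_sub x).const_smul s⁻¹
    have h3 := (h1.comp z h2).fderiv
    simp only [Function.comp_def] at h3
    rw [hh, h3, ContinuousLinearMap.comp_apply, hηφ]
    simp [inner_smul_left, inner_smul_right]
    ring
  have hlap : ∀ z, eLap h z = ∑ i : Fin n,
      fderiv ℝ (fun z => fderiv ℝ h z (EuclideanSpace.single i 1)) z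
        (EuclideanSpace.single i 1) := by
    intro z
    unfold eLap
    refine Finset.sum_congr rfl fun i _ => ?_
    rw [iteratedFDeriv_two_apply]
    have := (hh'.differentiable (by simp) z).hasFDerivAt.clm_apply
      (hasFDerivAt_const (EuclideanSpace.single i (1 : ℝ)) z)
    rw [this.fderiv]
    simp
  have hV' : Continuous (fderiv ℝ V) := hV.continuous_fderiv (by simp)
  have hVc' : HasCompactSupport (fderiv ℝ V) := hVc.fderiv (𝕜 := ℝ)
  have hdi : ∀ w, ContDiff ℝ ∞ (fun z => fderiv ℝ h z w) := fun w =>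
    hh'.clm_apply contDiff_const
  have hddi : ∀ w, Continuous (fun z => fderiv ℝ (fun z => fderiv ℝ h z w) z w) := fun w =>
    ((hdi w).continuous_fderiv (by simp)).clm_apply continuous_const
  have hI1 : ∀ w, Integrable (fun z => V z * fderiv ℝ (fun z => fderiv ℝ h z w) z w) := fun w =>
    (hV.continuous.mul (hddi w)).integrable_of_hasCompactSupport hVc.mul_right
  have hVcw : ∀ w, HasCompactSupport (fun z => fderiv ℝ V z w) := fun w =>
    hVc.fderiv_apply (𝕜 := ℝ) w
  have hI2 : ∀ w, Integrable (fun z => fderiv ℝ V z w * fderiv ℝ h z w) := fun w =>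
    ((hV'.clm_apply continuous_const).mul (hdi w).continuous).integrable_of_hasCompactSupport
      (hVcw w).mul_right
  have hparts : ∀ w, ∫ z, V z * fderiv ℝ (fun z => fderiv ℝ h z w) z w
      = - ∫ z, fderiv ℝ V z w * fderiv ℝ h z w := by
    intro w
    apply integral_mul_fderiv_eq_neg_fderiv_mul_of_integrable (hI2 w) (hI1 w)
    · exact (hV.continuous.mul (hdi w).continuous).integrable_of_hasCompactSupport hVc.mul_right
    · exact fun z _ => hV.differentiable (by simp) z
    · exact fun z _ => (hdi w).differentiable (by simp) z
  have hsum : ∫ z, V z * eLap h z =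
      s⁻¹ * ∫ z, φ (s⁻¹ • (x - z)) * fderiv ℝ V z (s⁻¹ • (x - z)) := by
    simp only [hlap, Finset.mul_sum]
    rw [integral_finsetSum _ (fun i _ => hI1 _)]
    simp only [hparts]
    rw [Finset.sum_neg_distrib, ← integral_finsetSum _ (fun i _ => hI2 _), ← integral_neg,
      ← integral_const_mul]
    congr 1
    ext z
    simp only [hdh]
    generalize s⁻¹ • (x - z) = y
    have hy : fderiv ℝ V z y = ∑ i, fderiv ℝ V z (EuclideanSpace.single i 1)
        * inner ℝ y (EuclideanSpace.single i 1) := by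
      conv_lhs => rw [← (EuclideanSpace.basisFun (Fin n) ℝ).sum_repr y]
      rw [map_sum]
      refine Finset.sum_congr rfl fun i _ => ?_
      simp [mul_comm, EuclideanSpace.inner_single_right]
    rw [hy, Finset.mul_sum, Finset.mul_sum, ← Finset.sum_neg_distrib]
    refine Finset.sum_congr rfl fun i _ => ?_
    ring
  have hz : ∀ z, x - s • (s⁻¹ • (x - z)) = z := by
    intro z
    rw [smul_inv_smul₀ hs.ne']; abel
  have c1 := weyl_change x s (fun y => φ y * fderiv ℝ V (x - s • y) y)
  have c2 := weyl_change x s (fun y => U (x - s • y) * η y)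
  simp only [hz] at c1 c2
  rw [hsum, c1, c2] at hweak
  have hk : |((s⁻¹) ^ Module.finrank ℝ (EuclideanSpace ℝ (Fin n)))⁻¹| ≠ 0 := by positivity
  generalize |((s⁻¹) ^ Module.finrank ℝ (EuclideanSpace ℝ (Fin n)))⁻¹| = k at *
  field_simp at hweak
  linarith

theorem weyl_cutoff {n : ℕ} {Ω : Set (EuclideanSpace ℝ (Fin n))} (hΩ : IsOpen Ω)
    (χ f : EuclideanSpace ℝ (Fin n) → ℝ) {m : ℕ∞} (hχ : ContDiff ℝ ∞ χ)
    (hχs : tsupport χ ⊆ Ω) (hf : ContDiffOn ℝ m f Ω) : ContDiff ℝ m (fun z => χ z * f z) := by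
  rw [contDiff_iff_contDiffAt]
  intro z
  by_cases hz : z ∈ Ω
  · exact (hχ.of_le (by exact_mod_cast le_top)).contDiffAt.mul (hf.contDiffAt (hΩ.mem_nhds hz))
  · have h0 : χ =ᶠ[𝓝 z] 0 := notMem_tsupport_iff_eventuallyEq.1 fun h => hz (hχs h)
    refine (contDiffAt_const (c := (0 : ℝ))).congr_of_eventuallyEq ?_
    filter_upwards [h0] with y hy
    simp [hy]

/-- The representation formula. -/
theorem weyl_repr {n : ℕ} (η φ V U : EuclideanSpace ℝ (Fin n) → ℝ)
    (hη : ContDiff ℝ ∞ η) (hηc : HasCompactSupport η) (hφ : ContDiff ℝ ∞ φ)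
    (hφc : HasCompactSupport φ)
    (hV : ContDiff ℝ 1 V) (hVc : HasCompactSupport V) (hU : ContDiff ℝ ∞ U)
    (hUc : HasCompactSupport U)
    (x : EuclideanSpace ℝ (Fin n)) (δ : ℝ) (hδ : 0 < δ)
    (hid : ∀ s ∈ Set.Ioo 0 δ,
      ∫ y, φ y * fderiv ℝ V (x - s • y) y = s * ∫ y, U (x - s • y) * η y) :
    V x * ∫ y, φ y = (∫ y, φ y * V (x - δ • y)) +
      ∫ a, (a.1 * η a.2) • U (x - a.1 • a.2)
        ∂((volume.restrict (Set.Ioc 0 δ)).prod (volume : Measure (EuclideanSpace ℝ (Fin n)))) := by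
  obtain ⟨C, hC⟩ := hVc.exists_bound_of_continuous hV.continuous
  obtain ⟨K, hK⟩ := hUc.exists_bound_of_continuous hU.continuous
  have hV' : Continuous (fderiv ℝ V) := hV.continuous_fderiv (by simp)
  obtain ⟨C', hC'⟩ := (hVc.fderiv (𝕜 := ℝ)).exists_bound_of_continuous hV'
  have hφi : Integrable φ := hφ.continuous.integrable_of_hasCompactSupport hφc
  have hηi : Integrable η := hη.continuous.integrable_of_hasCompactSupport hηc
  have hφi' : Integrable (fun y => φ y * (C' * ‖y‖)) :=
    (hφ.continuous.mul (by fun_prop)).integrable_of_hasCompactSupport hφc.mul_right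
  have hVcont := hV.continuous
  have hUcont := hU.continuous
  have hφcont := hφ.continuous
  have hηcont := hη.continuous
  have hder : ∀ s : ℝ, HasDerivAt (fun s : ℝ => ∫ y, φ y * V (x - s • y))
      (∫ y, φ y * - fderiv ℝ V (x - s • y) y) s := by
    intro s
    refine (hasDerivAt_integral_of_dominated_loc_of_deriv_le (s := Set.univ)
      (F := fun s y => φ y * V (x - s • y)) (F' := fun s y => φ y * - fderiv ℝ V (x - s • y) y)
      (bound := fun y => ‖φ y * (C' * ‖y‖)‖) univ_mem ?_ ?_ ?_ ?_ hφi'.norm ?_).2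
    · refine .of_forall fun s => Continuous.aestronglyMeasurable ?_
      fun_prop
    · refine Continuous.integrable_of_hasCompactSupport ?_ hφc.mul_right
      fun_prop
    · refine Continuous.aestronglyMeasurable ?_
      refine hφcont.mul (Continuous.neg ?_)
      exact (hV'.comp (by fun_prop)).clm_apply continuous_id
    · refine .of_forall fun y s _ => ?_
      rw [norm_mul, norm_mul, norm_neg]
      refine mul_le_mul_of_nonneg_left ?_ (norm_nonneg _)
      refine ((fderiv ℝ V (x - s • y)).le_opNorm y).trans ?_
      exact (mul_le_mul_of_nonneg_right (hC' _) (norm_nonneg _)).trans (le_abs_self _)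
    · refine .of_forall fun y s _ => ?_
      refine HasDerivAt.const_mul (φ y) ?_
      have h1 := (hV.differentiable (by simp) (x - s • y)).hasFDerivAt
      have h2 : HasDerivAt (fun s : ℝ => x - s • y) (-y) s := by
        simpa using ((hasDerivAt_id s).smul_const y).const_sub x
      have h3 := h1.comp_hasDerivAt s h2
      rw [map_neg] at h3
      exact h3
  have hB : Continuous (fun s : ℝ => ∫ y, U (x - s • y) * η y) := by
    refine continuous_of_dominated (bound := fun y => K * ‖η y‖) ?_ ?_ (hηi.norm.const_mul K) ?_
    · intro s
      refine Continuous.aestronglyMeasurable ?_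
      fun_prop
    · refine fun s => .of_forall fun y => ?_
      rw [norm_mul]
      exact mul_le_mul_of_nonneg_right (hK _) (norm_nonneg _)
    · refine .of_forall fun y => ?_
      fun_prop
  have hftc := intervalIntegral.integral_eq_sub_of_hasDerivAt_of_le
    (f := fun s : ℝ => ∫ y, φ y * V (x - s • y))
    (f' := fun s => -(s * ∫ y, U (x - s • y) * η y)) hδ.le
    (fun s _ => (hder s).continuousAt.continuousWithinAt)
    (fun s hs => by
      have := hder s
      simp only [mul_neg] at this
      rw [integral_neg, hid s hs] at this
      exact this)
    ((continuous_id.mul hB).neg.intervalIntegrable 0 δ)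
  have hprod : ∫ a, (a.1 * η a.2) • U (x - a.1 • a.2)
      ∂((volume.restrict (Set.Ioc 0 δ)).prod (volume : Measure (EuclideanSpace ℝ (Fin n))))
      = ∫ s in (0 : ℝ)..δ, s * ∫ y, U (x - s • y) * η y := by
    rw [integral_prod, intervalIntegral.integral_of_le hδ.le]
    · congr 1
      ext s
      rw [← integral_const_mul]
      congr 1
      ext y
      simp only [smul_eq_mul]
      ring
    · have hw : Integrable (fun a : ℝ × EuclideanSpace ℝ (Fin n) => a.1 * η a.2)
          ((volume.restrict (Set.Ioc 0 δ)).prod volume) := by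
        refine Integrable.mul_prod (f := fun s : ℝ => s) ?_ hηi
        exact (continuous_id.intervalIntegrable (μ := volume) 0 δ).1
      have hbd : ∀ a : ℝ × EuclideanSpace ℝ (Fin n),
          ‖U (x - a.1 • a.2)‖ ≤ K := fun a => hK _
      refine hw.mul_bdd (c := K) ?_ (.of_forall hbd)
      refine Continuous.aestronglyMeasurable ?_
      fun_prop
  rw [hprod]
  rw [intervalIntegral.integral_neg] at hftc
  simp only [zero_smul, sub_zero] at hftc
  rw [integral_mul_const] at hftc
  linarith

theorem weyl_smooth_conv {n : ℕ} (φ V : EuclideanSpace ℝ (Fin n) → ℝ)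
    (hφ : ContDiff ℝ ∞ φ) (hφc : HasCompactSupport φ) (hV : Continuous V) (δ : ℝ) (hδ : 0 < δ) :
    ContDiff ℝ ∞ (fun x => ∫ y, φ y * V (x - δ • y)) := by
  have hψ : ContDiff ℝ ∞ (fun y => φ (δ⁻¹ • y)) := hφ.comp (by fun_prop)
  have hψc : HasCompactSupport (fun y => φ (δ⁻¹ • y)) := hφc.comp_smul (inv_ne_zero hδ.ne')
  have hconv := hψc.contDiff_convolution_right (μ := volume) (ContinuousLinearMap.mul ℝ ℝ)
    hV.locallyIntegrable (n := ⊤) hψ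
  have hk : |((δ⁻¹) ^ Module.finrank ℝ (EuclideanSpace ℝ (Fin n)))⁻¹| ≠ 0 := by positivity
  have heq : (fun x => ∫ y, φ y * V (x - δ • y)) = fun x =>
      |((δ⁻¹) ^ Module.finrank ℝ (EuclideanSpace ℝ (Fin n)))⁻¹|⁻¹ *
      convolution V (fun y => φ (δ⁻¹ • y)) (ContinuousLinearMap.mul ℝ ℝ) volume x := by
    ext x
    have hz : ∀ z, x - δ • (δ⁻¹ • (x - z)) = z := by
      intro z
      rw [smul_inv_smul₀ hδ.ne']; abel
    have c1 := weyl_change x δ (fun y => φ y * V (x - δ • y))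
    simp only [hz] at c1
    rw [convolution_def]
    simp only [ContinuousLinearMap.mul_apply']
    simp only [mul_comm (V _)]
    rw [c1, inv_mul_cancel_left₀ hk]
  rw [heq]
  exact contDiff_const.mul hconv

end WeylHelpers

/-- Elliptic regularity (Weyl's lemma): if `v` is a `C¹` function on an open set `Ω ⊆ ℝⁿ`
which satisfies `Δv = u` weakly for a `C¹` function `u`, and `u` is smooth, then `v` is
smooth. -/
theorem smooth_of_weak_laplace_eq_smooth
    {n : ℕ} (Ω : Set (EuclideanSpace ℝ (Fin n))) (hΩ : IsOpen Ω)
    (v u : EuclideanSpace ℝ (Fin n) → ℝ)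
    (hv : ContDiffOn ℝ 1 v Ω) (hu : ContDiffOn ℝ 1 u Ω)
    (husm : ContDiffOn ℝ (⊤ : ℕ∞) u Ω)
    (hweak : ∀ h : EuclideanSpace ℝ (Fin n) → ℝ, ContDiff ℝ (⊤ : ℕ∞) h →
      HasCompactSupport h → tsupport h ⊆ Ω →
      ∫ x in Ω, v x * eLap h x = ∫ x in Ω, u x * h x) :
    ContDiffOn ℝ (⊤ : ℕ∞) v Ω := by
  intro x0 hx0
  apply ContDiffAt.contDiffWithinAt
  obtain ⟨r, hr, hrΩ⟩ := Metric.isOpen_iff.1 hΩ x0 hx0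
  obtain ⟨η, φ, hη, hφ, hη0, hφ0, hηφ, hc⟩ := weyl_kernels n
  have hcs : ∀ f : EuclideanSpace ℝ (Fin n) → ℝ, (∀ y, 1 ≤ ‖y‖ → f y = 0) →
      HasCompactSupport f := by
    intro f hf
    apply HasCompactSupport.intro (isCompact_closedBall (0 : EuclideanSpace ℝ (Fin n)) 1)
    intro y hy
    apply hf
    simp at hy
    exact hy.le
  have hηc := hcs η hη0
  have hφc := hcs φ hφ0
  let χ : ContDiffBump x0 := ⟨r / 2, 3 * r / 4, by linarith, by linarith⟩
  have hχ : ContDiff ℝ (⊤ : ℕ∞) χ := χ.contDiff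
  have hχs : tsupport χ ⊆ Ω := by
    rw [χ.tsupport_eq]
    exact (Metric.closedBall_subset_ball (by change 3 * r / 4 < r; linarith)).trans hrΩ
  have hχ1 : ∀ z ∈ Metric.closedBall x0 (r / 2), χ z = 1 := fun z hz =>
    χ.one_of_mem_closedBall hz
  have hV : ContDiff ℝ 1 (fun z => χ z * v z) :=
    weyl_cutoff hΩ χ v (m := 1) hχ hχs hv
  have hU := weyl_cutoff hΩ χ u hχ hχs husm
  have hVc : HasCompactSupport (fun z => χ z * v z) := χ.hasCompactSupport.mul_right
  have hUc : HasCompactSupport (fun z => χ z * u z) := χ.hasCompactSupport.mul_right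
  set δ : ℝ := r / 4 with hδ
  have hδ0 : 0 < δ := by positivity
  have key : ∀ x ∈ Metric.ball x0 δ, ∀ s ∈ Set.Ioo 0 δ,
      ∫ y, φ y * fderiv ℝ (fun z => χ z * v z) (x - s • y) y
        = s * ∫ y, (fun z => χ z * u z) (x - s • y) * η y := by
    intro x hx s hs
    refine weyl_identity η φ _ (fun z => χ z * u z) hη hηφ hV hVc x s hs.1 ?_
    set h : EuclideanSpace ℝ (Fin n) → ℝ := fun z => η (s⁻¹ • (x - z)) with hh
    have hhs : ContDiff ℝ (⊤ : ℕ∞) h :=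
      hη.comp (by fun_prop)
    have hsupp : tsupport h ⊆ Metric.closedBall x s := by
      refine closure_minimal ?_ Metric.isClosed_closedBall
      intro z hz
      by_contra hcon
      apply hz
      apply hη0
      rw [norm_smul, norm_inv, Real.norm_of_nonneg hs.1.le, ← div_eq_inv_mul,
        one_le_div hs.1, ← dist_eq_norm, dist_comm]
      simp at hcon
      exact hcon.le
    have hsub : Metric.closedBall x s ⊆ Metric.closedBall x0 (r / 2) := by
      apply Metric.closedBall_subset_closedBall'
      have := hs.2
      have := Metric.mem_ball.1 hx
      linarith
    have hsubΩ : Metric.closedBall x0 (r / 2) ⊆ Ω :=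
      (Metric.closedBall_subset_ball (by linarith)).trans hrΩ
    have hw := hweak h hhs
      ((isCompact_closedBall x s).of_isClosed_subset (isClosed_tsupport h) hsupp)
      (hsupp.trans (hsub.trans hsubΩ))
    have hh0 : ∀ z, z ∉ tsupport h → h z = 0 := fun z hz => image_eq_zero_of_notMem_tsupport hz
    have hl0 : ∀ z, z ∉ tsupport h → eLap h z = 0 := by
      intro z hz
      have h2 : iteratedFDeriv ℝ 2 h z = 0 := by
        by_contra hcon
        exact hz (support_iteratedFDeriv_subset (𝕜 := ℝ) 2 hcon)
      simp [eLap, h2]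
    have e1 : ∀ z, χ z * v z * eLap h z = v z * eLap h z := by
      intro z
      by_cases hz : z ∈ tsupport h
      · rw [hχ1 z (hsub (hsupp hz)), one_mul]
      · rw [hl0 z hz, mul_zero, mul_zero]
    have e2 : ∀ z, χ z * u z * h z = u z * h z := by
      intro z
      by_cases hz : z ∈ tsupport h
      · rw [hχ1 z (hsub (hsupp hz)), one_mul]
      · rw [hh0 z hz, mul_zero, mul_zero]
    have hout : ∀ z, z ∉ Ω → z ∉ tsupport h := fun z hz hz' => hz (hsubΩ (hsub (hsupp hz')))
    rw [setIntegral_eq_integral_of_forall_compl_eq_zero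
        (fun z hz => by rw [hl0 z (hout z hz), mul_zero]),
      setIntegral_eq_integral_of_forall_compl_eq_zero
        (fun z hz => by rw [hh0 z (hout z hz), mul_zero])] at hw
    simp only [e1]
    rw [hw]
    exact (integral_congr_ae (.of_forall e2)).symm
  have hηi : Integrable η := hη.continuous.integrable_of_hasCompactSupport hηc
  have hw : Integrable (fun a : ℝ × EuclideanSpace ℝ (Fin n) => a.1 * η a.2)
      ((volume.restrict (Set.Ioc 0 δ)).prod volume) := by
    refine Integrable.mul_prod (f := fun s : ℝ => s) ?_ hηi
    exact (continuous_id.intervalIntegrable (μ := volume) 0 δ).1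
  have hF : ContDiff ℝ (⊤ : ℕ∞) (fun x => ∫ a, (a.1 * η a.2) • (χ (x - a.1 • a.2) * u (x - a.1 • a.2))
      ∂((volume.restrict (Set.Ioc 0 δ)).prod (volume : Measure (EuclideanSpace ℝ (Fin n))))) := by
    rw [contDiff_infty]
    intro m
    exact weyl_contDiff_param _ (fun a : ℝ × EuclideanSpace ℝ (Fin n) => a.1 * η a.2)
      (fun a => a.1 • a.2) hw (by fun_prop) m (fun z => χ z * u z) hU hUc
  have hA := weyl_smooth_conv φ _ hφ hφc hV.continuous δ hδ0
  refine ((hA.add hF).mul (contDiff_const (c := (∫ y, φ y)⁻¹))).contDiffAt.congr_of_eventuallyEq ?_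
  filter_upwards [Metric.ball_mem_nhds x0 hδ0] with x hx
  have hrep := weyl_repr η φ _ _ hη hηc hφ hφc hV hVc hU hUc x δ hδ0 (key x hx)
  have hx1 : χ x = 1 := hχ1 x (by
    have := Metric.mem_ball.1 hx
    rw [Metric.mem_closedBall]
    linarith)
  simp only [hx1, one_mul] at hrep
  rw [← hrep, mul_inv_cancel_right₀ hc.ne']
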